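/- Let A be a commutative ℂ-algebra of finite type equipped with a ℤ-grading A = ⊕_{d∈ℤ} A_d (with A_d · A_e ⊆ A_{d+e}), and let 𝔪 ⊂ A be a maximal ideal generated by homogeneous elements with residue field A/𝔪 ≅ ℂ. Let n = dim_ℂ 𝔪/𝔪². Then there exist a homogeneous element g ∈ A of degree 0 with g ∉ 𝔪, a ℤ-graded commutative ℂ-algebra B of finite type that is smooth over ℂ of relative dimension n, and a surjective ℂ-algebra homomorphism B → A_g onto the localization of A at g that preserves the gradings. -/

import Mathlib

open MvPolynomial

theorem MvPolynomial.height_eq_natCard_of_isMaximal (k : Type*) [Field k] (σ : Type*) [Finite σ]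
    (P : Ideal (MvPolynomial σ k)) [hP : P.IsMaximal] : P.height = Nat.card σ := by
  induction σ using Finite.induction_empty_option with
  | @of_equiv α β e H =>
    have : (P.comap (renameEquiv k e).toRingEquiv).IsMaximal :=
      Ideal.comap_isMaximal_of_equiv (renameEquiv k e).toRingEquiv
    rw [← RingEquiv.height_comap (renameEquiv k e).toRingEquiv, H, Nat.card_congr e]
  | h_empty =>
    have : IsField (MvPolynomial PEmpty k) :=
      (isEmptyRingEquiv k PEmpty).toMulEquiv.isField (Field.toIsField k)
    let := this.toField
    have : P = ⊥ := (Ideal.eq_bot_or_top P).resolve_right hP.ne_top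
    simp [this]
  | @h_option α _ H =>
    let e := (optionEquivLeft k α).symm.toRingEquiv
    have hM : (P.comap e).IsMaximal := Ideal.comap_isMaximal_of_equiv e
    have := Polynomial.isMaximal_comap_C_of_isJacobsonRing (P.comap e)
    have : (P.comap e).LiesOver ((P.comap e).comap Polynomial.C) := ⟨rfl⟩
    rw [← RingEquiv.height_comap e,
      Polynomial.height_eq_height_add_one ((P.comap e).comap Polynomial.C), H, Finite.card_option]
    simp

theorem ringKrullDim_le_of_quasiFinite (R S : Type*) [CommRing R] [CommRing S] [Algebra R S]
    [Algebra.QuasiFinite R S] : ringKrullDim S ≤ ringKrullDim R := by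
  refine Order.krullDim_le_of_strictMono (PrimeSpectrum.comap (algebraMap R S)) fun P Q hPQ ↦ ?_
  refine lt_of_le_of_ne (Ideal.comap_mono hPQ.le) fun h ↦ hPQ.ne ?_
  exact PrimeSpectrum.ext (Algebra.QuasiFinite.eq_of_le_of_under_eq (R := R) _ _ hPQ.le
    (congrArg PrimeSpectrum.asIdeal h))

theorem Ideal.isMaximal_under_of_finiteType {R S : Type*} [CommRing R] [CommRing S] [Algebra R S]
    [IsJacobsonRing R] [Algebra.FiniteType R S] (M : Ideal S) [M.IsMaximal] :
    (M.under R).IsMaximal := by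
  let := Ideal.Quotient.field M
  have := finite_of_finite_type_of_isJacobsonRing R (S ⧸ M)
  have h : (⊥ : Ideal (S ⧸ M)).under R = M.under R := by
    ext x
    exact Ideal.Quotient.eq_zero_iff_mem (I := M)
  rw [← h]
  infer_instance

theorem ringKrullDim_eq_natCard_of_etale (k σ S : Type*) [Field k] [Finite σ] [CommRing S]
    [Algebra (MvPolynomial σ k) S] [Algebra.Etale (MvPolynomial σ k) S] [Nontrivial S] :
    ringKrullDim S = Nat.card σ := by
  have : IsNoetherianRing S := Algebra.FiniteType.isNoetherianRing (MvPolynomial σ k) S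
  refine le_antisymm ?_ ?_
  · refine (ringKrullDim_le_of_quasiFinite (MvPolynomial σ k) S).trans ?_
    simp
  · obtain ⟨M, hM⟩ := Ideal.exists_maximal S
    have hp : (M.under (MvPolynomial σ k)).IsMaximal :=
      Ideal.isMaximal_under_of_finiteType M
    have h := Ideal.height_eq_height_add_of_liesOver_of_hasGoingDown
      (M.under (MvPolynomial σ k)) M
    rw [MvPolynomial.height_eq_natCard_of_isMaximal k σ] at h
    refine le_trans ?_ (Ideal.height_le_ringKrullDim_of_ne_top hM.ne_top)
    rw [h]
    exact_mod_cast le_self_add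

theorem Algebra.PreSubmersivePresentation.etale_away_jacobian {R S ι : Type*} [CommRing R]
    [CommRing S] [Algebra R S] [Finite ι] (P : Algebra.PreSubmersivePresentation R S ι ι) :
    Algebra.Etale R (Localization.Away P.jacobian) := by
  let Q := Algebra.PreSubmersivePresentation.localizationAway
    (Localization.Away P.jacobian) P.jacobian
  have hu : IsUnit (algebraMap S (Localization.Away P.jacobian) P.jacobian) :=
    IsLocalization.Away.algebraMap_isUnit _
  let W : Algebra.SubmersivePresentation R (Localization.Away P.jacobian) (Unit ⊕ ι) (Unit ⊕ ι) :=
    { toPreSubmersivePresentation := Q.comp P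
      jacobian_isUnit := by
        rw [PreSubmersivePresentation.comp_jacobian_eq_jacobian_smul_jacobian,
          PreSubmersivePresentation.localizationAway_jacobian, Algebra.smul_def]
        exact hu.mul hu }
  rw [Algebra.Etale.iff_isStandardSmoothOfRelativeDimension_zero]
  exact W.isStandardSmoothOfRelativeDimension (by simp [Presentation.dimension])

/-- Adjoining as many variables as relations and inverting the Jacobian determinant yields an
étale algebra. -/
theorem Algebra.etale_away_mk_det_pderiv {R ι : Type*} [CommRing R] [Fintype ι] [DecidableEq ι]
    (f : ι → MvPolynomial ι R) :
    Algebra.Etale R (Localization.Away (Ideal.Quotient.mk (Ideal.span (Set.range f))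
      (Matrix.of fun i j ↦ pderiv i (f j)).det)) := by
  let P : Algebra.PreSubmersivePresentation R (MvPolynomial ι R ⧸ Ideal.span (Set.range f)) ι ι :=
    { toPresentation := Algebra.Presentation.naive
      map := _root_.id
      map_inj := Function.injective_id }
  have : P.jacobian = Ideal.Quotient.mk (Ideal.span (Set.range f))
      (Matrix.of fun i j ↦ pderiv i (f j)).det := by
    rw [P.jacobian_eq_jacobiMatrix_det]
    change algebraMap P.Ring _ _ = algebraMap (MvPolynomial ι R) _ _
    congr 2
    ext i j : 1
    rw [P.jacobiMatrix_apply]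
    rfl
  rw [← this]
  exact P.etale_away_jacobian

section GradedAlgebra

variable {ι R A : Type*} [DecidableEq ι] [AddCommMonoid ι] [CommRing R] [CommRing A] [Algebra R A]

theorem GradedAlgebra.nonempty_of_isInternal (𝒜 : ι → Submodule R A) (h : SetLike.GradedMonoid 𝒜)
    (hind : iSupIndep 𝒜) (htop : ⨆ i, 𝒜 i = ⊤) : Nonempty (GradedAlgebra 𝒜) :=
  ⟨{ h, (DirectSum.isInternal_submodule_of_iSupIndep_of_iSup_eq_top hind
    htop).chooseDecomposition with }⟩

variable (𝒜 : ι → Submodule R A) [GradedAlgebra 𝒜]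

theorem Ideal.IsHomogeneous.mem_of_sum_mem {𝒜 : ι → Submodule R A} [GradedAlgebra 𝒜] {I : Ideal A}
    (hI : I.IsHomogeneous 𝒜) {s : Finset ι} {a : ι → A} (ha : ∀ i ∈ s, a i ∈ 𝒜 i)
    (hsum : ∑ i ∈ s, a i ∈ I) {i : ι} (hi : i ∈ s) : a i ∈ I := by
  have h := hI i hsum
  rw [DirectSum.decompose_sum, DFinsupp.finsetSum_apply, AddSubmonoidClass.coe_finsetSum,
    Finset.sum_eq_single i, DirectSum.decompose_of_mem_same 𝒜 (ha i hi)] at h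
  · exact h
  · exact fun j hj hji ↦ DirectSum.decompose_of_mem_ne 𝒜 (ha j hj) hji
  · exact fun h ↦ absurd hi h

/-- The image of a grading under a surjective algebra map with homogeneous kernel. -/
theorem GradedAlgebra.nonempty_map {B : Type*} [CommRing B] [Algebra R B] (f : A →ₐ[R] B)
    (hf : Function.Surjective f) (hker : (RingHom.ker f).IsHomogeneous 𝒜) :
    Nonempty (GradedAlgebra fun i ↦ (𝒜 i).map f.toLinearMap) := by
  refine GradedAlgebra.nonempty_of_isInternal _
    { one_mem := ⟨1, SetLike.GradedOne.one_mem, map_one f⟩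
      mul_mem := ?_ } ?_ ?_
  · rintro i j _ _ ⟨a, ha, rfl⟩ ⟨b, hb, rfl⟩
    exact ⟨a * b, SetLike.GradedMul.mul_mem ha hb, map_mul f a b⟩
  · rw [iSupIndep_iff_finsetSum_eq_zero_imp_eq_zero]
    intro s v hv hsum i hi
    choose! a ha hav using hv
    rw [← hav i hi]
    refine hker.mem_of_sum_mem ha ?_ hi
    rw [RingHom.mem_ker, map_sum, ← hsum]
    exact Finset.sum_congr rfl hav
  · rw [← Submodule.map_iSup, (DirectSum.Decomposition.isInternal 𝒜).submodule_iSup_eq_top,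
      Submodule.map_top, LinearMap.range_eq_top]
    exact hf

theorem GradedAlgebra.pow_mul_mem {g : A} (hg : g ∈ 𝒜 0) {i : ι} {a : A} (ha : a ∈ 𝒜 i) (k : ℕ) :
    g ^ k * a ∈ 𝒜 i := by
  simpa using SetLike.GradedMul.mul_mem (SetLike.pow_mem_graded k hg) ha

/-- The homogeneous pieces of the localization of a graded algebra away from `g`, for `g`
homogeneous of degree zero. -/
def GradedAlgebra.away (g : A) (hg : g ∈ 𝒜 0) (i : ι) : Submodule R (Localization.Away g) where
  carrier := {x | ∃ k : ℕ, ∃ a ∈ 𝒜 i, x * algebraMap A _ (g ^ k) = algebraMap A _ a}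
  zero_mem' := ⟨0, 0, zero_mem _, by simp⟩
  add_mem' := by
    rintro x y ⟨k, a, ha, hx⟩ ⟨l, b, hb, hy⟩
    refine ⟨k + l, g ^ l * a + g ^ k * b, add_mem (GradedAlgebra.pow_mul_mem 𝒜 hg ha l)
      (GradedAlgebra.pow_mul_mem 𝒜 hg hb k), ?_⟩
    rw [map_add, map_mul, map_mul, ← hx, ← hy, pow_add, map_mul]
    ring
  smul_mem' := by
    rintro c x ⟨k, a, ha, hx⟩
    exact ⟨k, c • a, Submodule.smul_mem _ c ha, by
      rw [smul_mul_assoc, hx, Algebra.smul_def, Algebra.smul_def, map_mul,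
        ← IsScalarTower.algebraMap_apply]⟩

variable {𝒜} {g : A} (hg : g ∈ 𝒜 0)
include hg

theorem GradedAlgebra.algebraMap_mem_away {i : ι} {a : A} (ha : a ∈ 𝒜 i) :
    algebraMap A (Localization.Away g) a ∈ GradedAlgebra.away 𝒜 g hg i :=
  ⟨0, a, ha, by simp⟩

theorem GradedAlgebra.isHomogeneous_ker_algebraMap_away :
    (RingHom.ker (algebraMap A (Localization.Away g))).IsHomogeneous 𝒜 := by
  intro i a ha
  rw [RingHom.mem_ker, IsLocalization.map_eq_zero_iff (.powers g)] at ha ⊢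
  obtain ⟨⟨_, k, rfl⟩, h⟩ := ha
  refine ⟨⟨_, k, rfl⟩, ?_⟩
  have := DirectSum.coe_decompose_mul_of_left_mem_zero 𝒜 (j := i) (b := a)
    (by simpa using SetLike.pow_mem_graded k hg : g ^ k ∈ 𝒜 0)
  simp only at h
  rw [h] at this
  simpa using this.symm

theorem GradedAlgebra.nonempty_away : Nonempty (GradedAlgebra (GradedAlgebra.away 𝒜 g hg)) := by
  classical
  have hunit (k : ℕ) : IsUnit (algebraMap A (Localization.Away g) (g ^ k)) := by
    rw [map_pow]
    exact (IsLocalization.Away.algebraMap_isUnit g).pow k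
  refine GradedAlgebra.nonempty_of_isInternal _
    { one_mem := ⟨0, 1, SetLike.GradedOne.one_mem, by simp⟩
      mul_mem := ?_ } ?_ ?_
  · rintro i j x y ⟨k, a, ha, hx⟩ ⟨l, b, hb, hy⟩
    refine ⟨k + l, a * b, SetLike.GradedMul.mul_mem ha hb, ?_⟩
    rw [map_mul, ← hx, ← hy, pow_add, map_mul]
    ring
  · rw [iSupIndep_iff_finsetSum_eq_zero_imp_eq_zero]
    intro s v hv hsum i hi
    choose! k a ha hav using hv
    have hle (j : ι) (hj : j ∈ s) : k j ≤ ∑ j ∈ s, k j :=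
      Finset.single_le_sum (fun _ _ ↦ Nat.zero_le _) hj
    have hv (j : ι) (hj : j ∈ s) : algebraMap A (Localization.Away g)
        (g ^ (∑ j ∈ s, k j - k j) * a j) = v j * algebraMap A _ (g ^ ∑ j ∈ s, k j) := by
      rw [map_mul, ← hav j hj, mul_left_comm, ← map_mul, ← pow_add, Nat.sub_add_cancel (hle j hj)]
    have := (GradedAlgebra.isHomogeneous_ker_algebraMap_away hg).mem_of_sum_mem (s := s)
      (fun j hj ↦ GradedAlgebra.pow_mul_mem 𝒜 hg (ha j hj) (∑ j ∈ s, k j - k j))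
      (by rw [RingHom.mem_ker, map_sum, Finset.sum_congr rfl hv, ← Finset.sum_mul, hsum, zero_mul])
      hi
    rwa [RingHom.mem_ker, hv i hi, (hunit _).mul_left_eq_zero] at this
  · rw [eq_top_iff]
    rintro x -
    obtain ⟨⟨a, ⟨_, k, rfl⟩⟩, h⟩ := IsLocalization.surj (.powers g) x
    obtain ⟨u, hu⟩ := hunit k
    have hx : x = ∑ i ∈ (DirectSum.decompose 𝒜 a).support,
        algebraMap A (Localization.Away g) (DirectSum.decompose 𝒜 a i : A) * ↑u⁻¹ := by
      rw [← Finset.sum_mul, ← map_sum, DirectSum.sum_support_decompose 𝒜 a, ← h, ← hu,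
        Units.mul_inv_cancel_right]
    rw [hx]
    refine Submodule.sum_mem _ fun i _ ↦ Submodule.mem_iSup_of_mem i ⟨k, DirectSum.decompose 𝒜 a i,
      SetLike.coe_mem _, ?_⟩
    rw [← hu, Units.inv_mul_cancel_right]

omit hg in
theorem GradedAlgebra.awayMap_mem_away {B : Type*} [CommRing B] [Algebra R B]
    {ℬ : ι → Submodule R B} [GradedAlgebra ℬ] {f : A →ₐ[R] B} (hf : ∀ i, ∀ a ∈ 𝒜 i, f a ∈ ℬ i)
    (hg : g ∈ 𝒜 0) {i : ι} {x : Localization.Away g} (hx : x ∈ GradedAlgebra.away 𝒜 g hg i) :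
    Localization.awayMapₐ f g x ∈ GradedAlgebra.away ℬ (f g) (hf 0 g hg) i := by
  obtain ⟨k, a, ha, h⟩ := hx
  refine ⟨k, f a, hf i a ha, ?_⟩
  have h' (b : A) : Localization.awayMapₐ f g (algebraMap A _ b) = algebraMap B _ (f b) :=
    IsLocalization.map_eq (T := .powers (f g))
      (Submonoid.powers_le.mpr (Submonoid.mem_powers (f g))) b
  rw [← h', ← h, map_mul, h', map_pow f]

end GradedAlgebra

theorem MvPolynomial.aeval_sub_algebraMap_constantCoeff_mem {k A σ : Type*} [CommRing k]
    [CommRing A] [Algebra k A] {I : Ideal A} {x : σ → A} (hx : ∀ i, x i ∈ I)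
    (p : MvPolynomial σ k) : aeval x p - algebraMap k A (constantCoeff p) ∈ I := by
  have h := Ideal.Quotient.mk_eq_mk_iff_sub_mem (I := I) (aeval x p)
    (algebraMap k A (constantCoeff p))
  rw [← h]
  have : ∀ i, Ideal.Quotient.mkₐ k I (x i) = 0 := fun i ↦ Ideal.Quotient.eq_zero_iff_mem.mpr (hx i)
  change Ideal.Quotient.mkₐ k I _ = Ideal.Quotient.mkₐ k I _
  rw [← AlgHom.comp_apply, comp_aeval, AlgHom.commutes]
  simp [this, aeval_zero']

theorem MvPolynomial.aeval_mem_of_isWeightedHomogeneous {k A σ M : Type*} [CommRing k]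
    [CommRing A] [Algebra k A] [AddCommMonoid M] [DecidableEq M] (𝒜 : M → Submodule k A)
    [SetLike.GradedMonoid 𝒜] {w : σ → M} {x : σ → A} (hx : ∀ i, x i ∈ 𝒜 (w i)) {d : M}
    {p : MvPolynomial σ k} (hp : p.IsWeightedHomogeneous w d) : aeval x p ∈ 𝒜 d := by
  rw [p.aeval_def, eval₂_eq]
  refine Submodule.sum_mem _ fun m hm ↦ ?_
  rw [← Algebra.smul_def]
  refine Submodule.smul_mem _ _ ?_
  rw [← hp (mem_support_iff.mp hm), Finsupp.weight_apply]
  exact SetLike.prod_pow_mem_graded 𝒜 _ _ _ fun i _ ↦ hx i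

theorem MvPolynomial.aeval_weightedHomogeneousComponent_eq_zero {k A σ M : Type*} [CommRing k]
    [CommRing A] [Algebra k A] [AddCommMonoid M] [DecidableEq M] (𝒜 : M → Submodule k A)
    [GradedAlgebra 𝒜] {w : σ → M} {x : σ → A} (hx : ∀ i, x i ∈ 𝒜 (w i))
    {p : MvPolynomial σ k} (hp : aeval x p = 0) (d : M) :
    aeval x (weightedHomogeneousComponent w d p) = 0 := by
  have hfin := weightedHomogeneousComponent_finsupp (w := w) p
  have hmem (d : M) : aeval x (weightedHomogeneousComponent w d p) ∈ 𝒜 d :=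
    aeval_mem_of_isWeightedHomogeneous 𝒜 hx (weightedHomogeneousComponent_isWeightedHomogeneous d p)
  by_cases hd : weightedHomogeneousComponent w d p = 0
  · rw [hd, map_zero]
  · refine (Ideal.IsHomogeneous.bot 𝒜).mem_of_sum_mem (s := hfin.toFinset) (fun i _ ↦ hmem i) ?_
      (i := d) (hfin.mem_toFinset.mpr hd)
    rw [← map_sum, ← finsum_eq_sum _ hfin, sum_weightedHomogeneousComponent, hp]
    rfl

theorem MvPolynomial.constantCoeff_pderiv {k σ : Type*} [CommRing k] (i : σ)
    (p : MvPolynomial σ k) : constantCoeff (pderiv i p) = coeff (Finsupp.single i 1) p := by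
  classical
  induction p using MvPolynomial.induction_on' with
  | monomial m a =>
    rw [pderiv_monomial, constantCoeff_monomial, coeff_monomial]
    by_cases h : m = Finsupp.single i 1
    · simp [h]
    · by_cases hi : m i = 0
      · simp [hi, h]
      · rw [if_neg, if_neg h]
        rw [tsub_eq_zero_iff_le]
        exact fun h0 ↦ h (le_antisymm h0 (Finsupp.single_le_iff.mpr (Nat.one_le_iff_ne_zero.mpr hi)))
  | add p q hp hq => simp [hp, hq]

section HomogeneousGenerators

variable {k A : Type*} [Field k] [CommRing A] [Algebra k A] (𝒜 : ℤ → Submodule k A)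
  [GradedAlgebra 𝒜] {𝔪 : Ideal A}

theorem exists_homogeneous_generators [Algebra.FiniteType k A] (h𝔪 : 𝔪.IsHomogeneous 𝒜)
    (hres : Function.Surjective (algebraMap k (A ⧸ 𝔪))) :
    ∃ (n : ℕ) (w : Fin n → ℤ) (x : Fin n → A), (∀ i, x i ∈ 𝒜 (w i)) ∧ (∀ i, x i ∈ 𝔪) ∧
      Function.Surjective (aeval x : MvPolynomial (Fin n) k →ₐ[k] A) := by
  classical
  have key (d : ℤ) (a : A) (ha : a ∈ 𝒜 d) :
      ∃ c : k, a - algebraMap k A c ∈ 𝒜 d ∧ a - algebraMap k A c ∈ 𝔪 := by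
    obtain ⟨c, hc⟩ := hres (Ideal.Quotient.mk 𝔪 a)
    have hc : a - algebraMap k A c ∈ 𝔪 := Ideal.Quotient.eq.mp hc.symm
    by_cases hd : d = 0
    · subst hd
      exact ⟨c, sub_mem ha (SetLike.algebraMap_mem_graded 𝒜 c), hc⟩
    · refine ⟨0, by simpa using ha, ?_⟩
      have := h𝔪 d hc
      rw [DirectSum.decompose_sub, DFinsupp.sub_apply, Submodule.coe_sub,
        DirectSum.decompose_of_mem_same 𝒜 ha, DirectSum.decompose_of_mem_ne 𝒜
        (SetLike.algebraMap_mem_graded 𝒜 c) (Ne.symm hd)] at this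
      simpa using this
  choose! c hc𝒜 hc𝔪 using key
  obtain ⟨s, hs⟩ := Algebra.FiniteType.out (R := k) (A := A)
  let t : Finset (ℤ × A) := s.biUnion fun a ↦ (DirectSum.decompose 𝒜 a).support.image
    fun d ↦ (d, (DirectSum.decompose 𝒜 a d : A))
  have ht (i : t) : i.1.2 ∈ 𝒜 i.1.1 := by
    obtain ⟨⟨d, b⟩, hi⟩ := i
    simp only [t, Finset.mem_biUnion, Finset.mem_image, Prod.mk.injEq] at hi
    obtain ⟨a, -, d, -, rfl, rfl⟩ := hi
    exact SetLike.coe_mem _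
  let e := t.equivFin.symm
  refine ⟨t.card, fun i ↦ (e i).1.1, fun i ↦ (e i).1.2 - algebraMap k A (c (e i).1.1 (e i).1.2),
    fun i ↦ hc𝒜 _ _ (ht _), fun i ↦ hc𝔪 _ _ (ht _), ?_⟩
  rw [← AlgHom.range_eq_top, ← Algebra.adjoin_range_eq_range_aeval, eq_top_iff, ← hs,
    Algebra.adjoin_le_iff]
  intro a ha
  rw [SetLike.mem_coe, ← DirectSum.sum_support_decompose 𝒜 a]
  refine sum_mem fun d hd ↦ ?_
  have hmem : (d, (DirectSum.decompose 𝒜 a d : A)) ∈ t :=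
    Finset.mem_biUnion.mpr ⟨a, ha, Finset.mem_image_of_mem _ hd⟩
  rw [← sub_add_cancel (DirectSum.decompose 𝒜 a d : A) (algebraMap k A (c d
    (DirectSum.decompose 𝒜 a d : A)))]
  refine add_mem (Algebra.subset_adjoin ⟨e.symm ⟨_, hmem⟩, ?_⟩) (Subalgebra.algebraMap_mem _ _)
  simp

theorem Ideal.eq_map_aeval_idealOfVars (h𝔪 : 𝔪 ≠ ⊤) {σ : Type*} {x : σ → A} (hx : ∀ i, x i ∈ 𝔪)
    (hsurj : Function.Surjective (aeval x : MvPolynomial σ k →ₐ[k] A)) :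
    𝔪 = (idealOfVars σ k).map (aeval x : MvPolynomial σ k →ₐ[k] A) := by
  refine le_antisymm (fun a ha ↦ ?_) ?_
  · obtain ⟨p, rfl⟩ := hsurj a
    refine Ideal.mem_map_of_mem _ ?_
    rw [← pow_one (idealOfVars σ k), mem_pow_idealOfVars_iff']
    intro m hm
    obtain rfl : m = 0 := by simpa [Finsupp.degree_eq_zero_iff] using hm
    by_contra hp
    refine h𝔪 (Ideal.eq_top_of_isUnit_mem _ ?_ ((IsUnit.mk0 _ hp).map (algebraMap k A)))
    simpa [constantCoeff_eq] using Ideal.sub_mem _ ha (aeval_sub_algebraMap_constantCoeff_mem hx p)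
  · rw [Ideal.map_span, Ideal.span_le]
    rintro _ ⟨_, ⟨i, rfl⟩, rfl⟩
    simpa using hx i

theorem MvPolynomial.sub_sum_coeff_mem_sq_idealOfVars {σ k : Type*} [CommRing k] [Fintype σ]
    {p : MvPolynomial σ k} (hp : p ∈ idealOfVars σ k) :
    p - ∑ i, C (coeff (Finsupp.single i 1) p) * X i ∈ idealOfVars σ k ^ 2 := by
  classical
  rw [← pow_one (idealOfVars σ k), mem_pow_idealOfVars_iff'] at hp
  rw [mem_pow_idealOfVars_iff']
  intro m hm
  rw [coeff_sub, coeff_sum]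
  simp only [coeff_C_mul, coeff_X]
  rcases Nat.lt_succ_iff_lt_or_eq.mp hm with h | h
  · rw [hp m h, Finset.sum_eq_zero, sub_zero]
    intro i _
    rw [if_neg, mul_zero]
    rintro rfl
    simp at h
  · obtain ⟨j, rfl⟩ : m ∈ Set.range fun i : σ ↦ Finsupp.single i 1 := by
      rwa [Finsupp.range_single_one]
    simp [Finsupp.single_left_inj]

theorem Ideal.exists_basis_cotangent (h𝔪 : 𝔪 ≠ ⊤) {σ : Type*} [Finite σ] {x : σ → A}
    (hx : ∀ i, x i ∈ 𝔪) (hsurj : Function.Surjective (aeval x : MvPolynomial σ k →ₐ[k] A)) :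
    ∃ (n : ℕ) (s : Fin n → σ), n = Module.finrank k 𝔪.Cotangent ∧
      ∀ a ∈ 𝔪, ∃ c : Fin n → k, a - ∑ i, c i • x (s i) ∈ 𝔪 ^ 2 := by
  have := Fintype.ofFinite σ
  let v (i : σ) : 𝔪.Cotangent := 𝔪.toCotangent ⟨x i, hx i⟩
  have hv : Submodule.span k (Set.range v) = ⊤ := by
    rw [eq_top_iff]
    rintro y -
    obtain ⟨⟨a, ha⟩, rfl⟩ := 𝔪.toCotangent_surjective y
    have ha' := ha
    rw [Ideal.eq_map_aeval_idealOfVars h𝔪 hx hsurj, Ideal.mem_map_iff_of_surjective _ hsurj] at ha'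
    obtain ⟨p, hp, hpa⟩ := ha'
    have h := Ideal.mem_map_of_mem (aeval x : MvPolynomial σ k →ₐ[k] A)
      (sub_sum_coeff_mem_sq_idealOfVars hp)
    rw [Ideal.map_pow, ← Ideal.eq_map_aeval_idealOfVars h𝔪 hx hsurj, map_sub, hpa, map_sum] at h
    have : 𝔪.toCotangent ⟨a, ha⟩ = ∑ i, coeff (Finsupp.single i 1) p • v i := by
      have e : ∑ i, coeff (Finsupp.single i 1) p • v i =
          𝔪.toCotangent (∑ i, coeff (Finsupp.single i 1) p • ⟨x i, hx i⟩) := by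
        rw [map_sum]
        exact Finset.sum_congr rfl fun i _ ↦ rfl
      rw [e, Ideal.toCotangent_eq]
      simpa [Algebra.smul_def] using h
    rw [this]
    exact Submodule.sum_mem _ fun i _ ↦ Submodule.smul_mem _ _ (Submodule.subset_span ⟨i, rfl⟩)
  obtain ⟨κ, s, hs, hsp, hli⟩ := exists_linearIndependent' k v
  have : Finite κ := Finite.of_injective s hs
  let b := (Module.Basis.mk hli (by rw [hsp, hv])).reindex (Finite.equivFin κ)
  have hb (i) : b i = v (s ((Finite.equivFin κ).symm i)) := by simp [b]
  refine ⟨Nat.card κ, fun i ↦ s ((Finite.equivFin κ).symm i), ?_, fun a ha ↦ ?_⟩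
  · simp [Module.finrank_eq_card_basis b]
  · refine ⟨b.repr (𝔪.toCotangent ⟨a, ha⟩), ?_⟩
    have h := b.sum_repr (𝔪.toCotangent ⟨a, ha⟩)
    simp only [hb, v] at h
    have e : ∑ i, b.repr (𝔪.toCotangent ⟨a, ha⟩) i • 𝔪.toCotangent
        ⟨x (s ((Finite.equivFin κ).symm i)), hx _⟩ = 𝔪.toCotangent
        (∑ i, b.repr (𝔪.toCotangent ⟨a, ha⟩) i • ⟨x (s ((Finite.equivFin κ).symm i)), hx _⟩) := by
      rw [map_sum]
      exact Finset.sum_congr rfl fun i _ ↦ rfl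
    rw [e, eq_comm, Ideal.toCotangent_eq] at h
    simpa using h

theorem exists_homogeneous_relation {σ τ : Type*} [Fintype σ] [DecidableEq τ]
    {w : τ ⊕ σ → ℤ} {x : τ ⊕ σ → A} (hw : ∀ i, x i ∈ 𝒜 (w i)) (h𝔪 : 𝔪 ≠ ⊤)
    (hx : ∀ i, x i ∈ 𝔪) (hsurj : Function.Surjective (aeval x : MvPolynomial (τ ⊕ σ) k →ₐ[k] A))
    {t : τ} {c : σ → k} (hc : x (.inl t) - ∑ i, c i • x (.inr i) ∈ 𝔪 ^ 2) :
    ∃ f : MvPolynomial (τ ⊕ σ) k, f.IsWeightedHomogeneous w (w (.inl t)) ∧ aeval x f = 0 ∧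
      ∀ t', constantCoeff (pderiv (.inl t') f) = if t' = t then 1 else 0 := by
  classical
  rw [Ideal.eq_map_aeval_idealOfVars h𝔪 hx hsurj, ← Ideal.map_pow,
    Ideal.mem_map_iff_of_surjective _ hsurj] at hc
  obtain ⟨q, hq, hqx⟩ := hc
  let p : MvPolynomial (τ ⊕ σ) k := X (.inl t) - ∑ i, C (c i) * X (.inr i) - q
  have hp : aeval x p = 0 := by
    have : aeval x q = x (.inl t) - ∑ i, c i • x (.inr i) := hqx
    simp [p, this, Algebra.smul_def]
  refine ⟨weightedHomogeneousComponent w (w (.inl t)) p,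
    weightedHomogeneousComponent_isWeightedHomogeneous _ _,
    aeval_weightedHomogeneousComponent_eq_zero 𝒜 hw hp _, fun t' ↦ ?_⟩
  have hq' : coeff (Finsupp.single (.inl t') 1) q = 0 :=
    (mem_pow_idealOfVars_iff' 2 q).mp hq _ (by simp)
  rw [constantCoeff_pderiv, coeff_weightedHomogeneousComponent]
  by_cases h : t' = t
  · subst h
    simp [p, hq', coeff_sum, coeff_X, Finsupp.single_left_inj, Finsupp.weight_single]
  · have h' : t ≠ t' := Ne.symm h
    simp [p, hq', coeff_sum, coeff_X, Finsupp.single_left_inj, h, h']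

end HomogeneousGenerators

theorem MvPolynomial.isWeightedHomogeneous_det_pderiv {R σ τ M : Type*} [CommRing R]
    [Fintype τ] [DecidableEq τ] [AddCommGroup M] {w : σ → M} {s : τ → σ}
    {f : τ → MvPolynomial σ R} (hf : ∀ j, (f j).IsWeightedHomogeneous w (w (s j))) :
    (Matrix.of fun i j ↦ pderiv (s i) (f j)).det.IsWeightedHomogeneous w 0 := by
  rw [Matrix.det_apply]
  refine IsWeightedHomogeneous.sum _ _ _ fun e _ ↦ ?_
  rw [← mem_weightedHomogeneousSubmodule, Units.smul_def]
  refine zsmul_mem ?_ _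
  rw [mem_weightedHomogeneousSubmodule]
  have h := IsWeightedHomogeneous.prod Finset.univ
    (fun j ↦ (Matrix.of fun i j ↦ pderiv (s i) (f j)) (e j) j)
    (fun j ↦ w (s j) - w (s (e j))) fun j _ ↦ (hf j).pderiv (sub_add_cancel _ _)
  rwa [Finset.sum_sub_distrib, Equiv.sum_comp e fun j ↦ w (s j), sub_self] at h

theorem MvPolynomial.constantCoeff_det_pderiv {R σ τ : Type*} [CommRing R] [Fintype τ]
    [DecidableEq τ] {s : τ → σ} {f : τ → MvPolynomial σ R}
    (hf : ∀ i j, constantCoeff (pderiv (s i) (f j)) = if i = j then 1 else 0) :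
    constantCoeff (Matrix.of fun i j ↦ pderiv (s i) (f j)).det = 1 := by
  rw [RingHom.map_det]
  rw [← Matrix.det_one (n := τ)]
  congr 1
  ext i j
  simp [hf, Matrix.one_apply]

theorem MvPolynomial.sumAlgEquiv_pderiv_inl {R σ τ : Type*} [CommRing R] (j : τ)
    (p : MvPolynomial (τ ⊕ σ) R) :
    sumAlgEquiv R τ σ (pderiv (.inl j) p) = pderiv j (sumAlgEquiv R τ σ p) := by
  have h : (sumAlgEquiv R τ σ).toAlgHom =
      aeval (Sum.elim X (C ∘ X)) := by
    ext i : 1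
    cases i <;> simp
  have h' (p) : sumAlgEquiv R τ σ p = aeval (Sum.elim X (C ∘ X)) p := DFunLike.congr_fun h p
  rw [h', h', aeval_sumElim_pderiv_inl]

theorem MvPolynomial.smooth_and_ringKrullDim_away_det_pderiv {k σ τ : Type*} [Field k] [Finite σ]
    [Fintype τ] [DecidableEq τ] (f : τ → MvPolynomial (τ ⊕ σ) k)
    [Nontrivial (Localization.Away (Ideal.Quotient.mk (Ideal.span (Set.range f))
        (Matrix.of fun i j ↦ pderiv (.inl i) (f j)).det))] :
    Algebra.Smooth k (Localization.Away (Ideal.Quotient.mk (Ideal.span (Set.range f))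
        (Matrix.of fun i j ↦ pderiv (.inl i) (f j)).det)) ∧
      ringKrullDim (Localization.Away (Ideal.Quotient.mk (Ideal.span (Set.range f))
        (Matrix.of fun i j ↦ pderiv (.inl i) (f j)).det)) = Nat.card σ := by
  let e := sumAlgEquiv k τ σ
  let f' : τ → MvPolynomial τ (MvPolynomial σ k) := fun j ↦ e (f j)
  have hI : Ideal.span (Set.range f') = (Ideal.span (Set.range f)).map (e : _ →+* _) := by
    rw [Ideal.map_span, ← Set.range_comp]
    rfl
  let q := Ideal.quotientEquivAlg _ _ e hI
  have hq : q (Ideal.Quotient.mk _ (Matrix.of fun i j ↦ pderiv (.inl i) (f j)).det) =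
      Ideal.Quotient.mk _ (Matrix.of fun i j ↦ pderiv i (f' j)).det := by
    change Ideal.Quotient.mk _ (e _) = _
    congr 1
    rw [AlgEquiv.map_det]
    congr 1
    ext i j : 1
    exact sumAlgEquiv_pderiv_inl i (f j)
  let B := Localization.Away (Ideal.Quotient.mk (Ideal.span (Set.range f'))
    (Matrix.of fun i j ↦ pderiv i (f' j)).det)
  have hB : Algebra.Etale (MvPolynomial σ k) B := Algebra.etale_away_mk_det_pderiv f'
  let E := IsLocalization.algEquivOfAlgEquiv
    (R := MvPolynomial (τ ⊕ σ) k ⧸ Ideal.span (Set.range f))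
    (P := MvPolynomial τ (MvPolynomial σ k) ⧸ Ideal.span (Set.range f'))
    (M := .powers (Ideal.Quotient.mk (Ideal.span (Set.range f))
      (Matrix.of fun i j ↦ pderiv (.inl i) (f j)).det))
    (T := .powers (Ideal.Quotient.mk (Ideal.span (Set.range f'))
      (Matrix.of fun i j ↦ pderiv i (f' j)).det))
    (Localization.Away (Ideal.Quotient.mk (Ideal.span (Set.range f))
      (Matrix.of fun i j ↦ pderiv (.inl i) (f j)).det)) B q (by rw [Submonoid.map_powers, ← hq])
  have : Algebra.Smooth k (MvPolynomial σ k) := ⟨inferInstance, inferInstance⟩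
  have : Algebra.Smooth k B := Algebra.Smooth.comp k (MvPolynomial σ k) B
  have : Nontrivial B := E.symm.toEquiv.nontrivial
  exact ⟨Algebra.Smooth.of_equiv E.symm, by
    rw [ringKrullDim_eq_of_ringEquiv E.toRingEquiv, ringKrullDim_eq_natCard_of_etale k σ B]⟩

/-- Let `A` be a ℤ-graded commutative ℂ-algebra of finite type and `𝔪 ⊂ A` a
maximal ideal generated by homogeneous elements with residue field `ℂ`, and let
`n = dim_ℂ 𝔪/𝔪²`. Then there is a homogeneous `g` of degree 0 with `g ∉ 𝔪`, a ℤ-graded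
commutative ℂ-algebra `B` of finite type, smooth over ℂ of dimension `n`, and a surjective
grading-preserving ℂ-algebra homomorphism `B → A_g` onto the localization of `A` at `g`
(with its induced grading). -/
theorem stmt_14 (A : Type*) [CommRing A] [Algebra ℂ A] [Algebra.FiniteType ℂ A]
    (𝒜 : ℤ → Submodule ℂ A) [GradedAlgebra 𝒜]
    (𝔪 : Ideal A) (hmax : 𝔪.IsMaximal)
    (hhomgen : ∃ S : Set A, 𝔪 = Ideal.span S ∧ ∀ s ∈ S, ∃ d : ℤ, s ∈ 𝒜 d)
    (hres : Function.Bijective (algebraMap ℂ (A ⧸ 𝔪))) :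
    ∃ g : A, g ∈ 𝒜 0 ∧ g ∉ 𝔪 ∧
      ∃ (B : Type) (_ : CommRing B) (_ : Algebra ℂ B),
        Algebra.FiniteType ℂ B ∧ Algebra.Smooth ℂ B ∧
        ringKrullDim B = (Module.finrank ℂ 𝔪.Cotangent : WithBot (WithTop ℕ)) ∧
        ∃ (ℬ : ℤ → Submodule ℂ B) (_ : GradedAlgebra ℬ)
          (𝒜' : ℤ → Submodule ℂ (Localization.Away g)) (_ : GradedAlgebra 𝒜'),
          (∀ d : ℤ, ∀ x ∈ 𝒜 d, algebraMap A (Localization.Away g) x ∈ 𝒜' d) ∧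
          ∃ φ : B →ₐ[ℂ] Localization.Away g,
            Function.Surjective φ ∧ ∀ d : ℤ, ∀ b ∈ ℬ d, φ b ∈ 𝒜' d := by
  classical
  have h𝔪 : 𝔪.IsHomogeneous 𝒜 := by
    obtain ⟨S, rfl, hS⟩ := hhomgen
    exact Ideal.homogeneous_span 𝒜 S hS
  obtain ⟨N, w₀, x₀, hw₀, hx₀, hsurj₀⟩ := exists_homogeneous_generators 𝒜 h𝔪 hres.surjective
  obtain ⟨n, s, hn, hs⟩ := Ideal.exists_basis_cotangent hmax.ne_top hx₀ hsurj₀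
  let w : Fin N ⊕ Fin n → ℤ := Sum.elim w₀ (w₀ ∘ s)
  let x : Fin N ⊕ Fin n → A := Sum.elim x₀ (x₀ ∘ s)
  have hw : ∀ i, x i ∈ 𝒜 (w i) := by
    rintro (i | i)
    exacts [hw₀ i, hw₀ (s i)]
  have hx : ∀ i, x i ∈ 𝔪 := by
    rintro (i | i)
    exacts [hx₀ i, hx₀ (s i)]
  have hsurj : Function.Surjective (aeval x : MvPolynomial (Fin N ⊕ Fin n) ℂ →ₐ[ℂ] A) := by
    intro a
    obtain ⟨p, rfl⟩ := hsurj₀ a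
    exact ⟨rename .inl p, by rw [aeval_rename]; rfl⟩
  have hrel (t : Fin N) : ∃ f : MvPolynomial (Fin N ⊕ Fin n) ℂ,
      f.IsWeightedHomogeneous w (w (.inl t)) ∧ aeval x f = 0 ∧
        ∀ t', constantCoeff (pderiv (.inl t') f) = if t' = t then 1 else 0 := by
    obtain ⟨c, hc⟩ := hs (x₀ t) (hx₀ t)
    exact exists_homogeneous_relation 𝒜 hw hmax.ne_top hx hsurj (c := c) hc
  choose f hfw hfx hf using hrel
  let I := Ideal.span (Set.range f)
  let h := (Matrix.of fun i j ↦ pderiv (.inl i) (f j)).det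
  have hh : h.IsWeightedHomogeneous w 0 := isWeightedHomogeneous_det_pderiv hfw
  have hle : I ≤ RingHom.ker (aeval x : MvPolynomial (Fin N ⊕ Fin n) ℂ →ₐ[ℂ] A) := by
    rw [Ideal.span_le]
    rintro _ ⟨t, rfl⟩
    exact hfx t
  let π : (MvPolynomial (Fin N ⊕ Fin n) ℂ ⧸ I) →ₐ[ℂ] A := Ideal.Quotient.liftₐ I (aeval x) hle
  have hπ : Function.Surjective π := fun a ↦
    let ⟨p, hp⟩ := hsurj a
    ⟨Ideal.Quotient.mk I p, hp⟩
  let _ := weightedGradedAlgebra ℂ w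
  have hI : I.IsHomogeneous (weightedHomogeneousSubmodule ℂ w) :=
    Ideal.homogeneous_span _ _ fun p ⟨t, ht⟩ ↦ ⟨_, ht ▸ hfw t⟩
  let 𝒬 (d : ℤ) : Submodule ℂ (MvPolynomial (Fin N ⊕ Fin n) ℂ ⧸ I) :=
    (weightedHomogeneousSubmodule ℂ w d).map (Ideal.Quotient.mkₐ ℂ I).toLinearMap
  obtain ⟨_⟩ : Nonempty (GradedAlgebra 𝒬) :=
    GradedAlgebra.nonempty_map (weightedHomogeneousSubmodule ℂ w)
      (Ideal.Quotient.mkₐ ℂ I) (Ideal.Quotient.mkₐ_surjective ℂ I)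
      (by rwa [← Ideal.Quotient.mkₐ_ker ℂ I] at hI)
  have hπ𝒜 : ∀ d, ∀ a ∈ 𝒬 d, π a ∈ 𝒜 d := by
    rintro d _ ⟨p, hp, rfl⟩
    exact aeval_mem_of_isWeightedHomogeneous 𝒜 hw hp
  have hmk : Ideal.Quotient.mk I h ∈ 𝒬 0 := ⟨h, hh, rfl⟩
  let g := π (Ideal.Quotient.mk I h)
  have hg : g ∈ 𝒜 0 := hπ𝒜 0 _ hmk
  have hg𝔪 : g ∉ 𝔪 := fun hmem ↦ by
    have hsub : g - algebraMap ℂ A (constantCoeff h) ∈ 𝔪 :=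
      aeval_sub_algebraMap_constantCoeff_mem hx h
    rw [constantCoeff_det_pderiv fun i j ↦ hf j i, map_one] at hsub
    exact hmax.ne_top ((Ideal.eq_top_iff_one _).mpr (by simpa using Ideal.sub_mem _ hmem hsub))
  obtain ⟨_⟩ := GradedAlgebra.nonempty_away hg
  obtain ⟨_⟩ := GradedAlgebra.nonempty_away hmk
  let φ := Localization.awayMapₐ π (Ideal.Quotient.mk I h)
  have hφ : Function.Surjective φ := IsLocalization.Away.mapₐ_surjective_of_surjective _ hπ
  have : Nontrivial (Localization.Away g) := by
    refine ⟨1, 0, fun h10 ↦ ?_⟩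
    rw [← map_one (algebraMap A _), IsLocalization.map_eq_zero_iff (.powers g)] at h10
    obtain ⟨⟨_, k, rfl⟩, hk⟩ := h10
    have hk : g ^ k = 0 := by simpa using hk
    exact hg𝔪 (hmax.isPrime.mem_of_pow_mem k (hk ▸ 𝔪.zero_mem))
  have : Nontrivial (Localization.Away (Ideal.Quotient.mk I h)) := φ.toRingHom.domain_nontrivial
  obtain ⟨hsmooth, hdim⟩ := smooth_and_ringKrullDim_away_det_pderiv f
  refine ⟨g, hg, hg𝔪, Localization.Away (Ideal.Quotient.mk I h), inferInstance, inferInstance,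
    inferInstance, hsmooth, ?_, _, ‹_›, _, ‹_›,
    fun d a ha ↦ GradedAlgebra.algebraMap_mem_away hg ha, φ, hφ,
    fun d b hb ↦ GradedAlgebra.awayMap_mem_away hπ𝒜 hmk hb⟩
  rw [← hn, hdim, Nat.card_fin]
  rfl
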